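/- Unique eigenvalue in each magnetic gap: let B ≠ 0, d > 0, b ∈ (0,d), and let z₀ < z₁ be two consecutive elements of Σ_B (i.e. (z₀,z₁) ∩ Σ_B = ∅). Assume Σ_{n ∈ J(z₀)} sin²(πnb/d) > 0 and Σ_{n ∈ J(z₁)} sin²(πnb/d) > 0, where J(z_i) := {n ∈ ℤ_{≥1} : ∃ m ∈ ℤ_{≥0}, |B|(2m+1) + (πn/d)² = z_i}. Then for every α ∈ ℝ there exists a unique z = ε(α) ∈ (z₀,z₁) with ξ_B(b,z) = α, and α ↦ ε(α) is strictly increasing. -/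

import Mathlib

open Real Filter Topology Asymptotics

/-- The digamma function `ψ = Γ'/Γ`. -/
noncomputable def digamma (x : ℝ) : ℝ := deriv Real.Gamma x / Real.Gamma x

/-- The set of Landau–transverse levels
`Σ_B = {|B|(2m+1) + (πn/d)² : m ∈ ℤ_{≥0}, n ∈ ℤ_{≥1}}` of the free magnetic
Hamiltonian in a Dirichlet layer of width `d`. -/
def landauLevels (B d : ℝ) : Set ℝ :=
  {x | ∃ m n : ℕ, x = |B| * (2 * (m : ℝ) + 1) + (π * ((n : ℝ) + 1) / d) ^ 2}

/-- The `n`-th term (for `n+1`-st transverse mode) of the series defining the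
magnetic regularized Green's function:
`t_n = ln((πn)²/(2|B|d²)) − ψ((|B| − z + (πn/d)²)/(2|B|))`. -/
noncomputable def magTerm (B d z : ℝ) (n : ℕ) : ℝ :=
  Real.log ((π * ((n : ℝ) + 1)) ^ 2 / (2 * |B| * d ^ 2)) -
    digamma ((|B| - z + (π * ((n : ℝ) + 1) / d) ^ 2) / (2 * |B|))

/-- The magnetic regularized Green's function `ξ_B(b,z)` of a point interaction at
height `b ∈ (0,d)` in the Dirichlet layer of width `d` with homogeneous magnetic
field of strength `B`. -/
noncomputable def xiB (B d b z : ℝ) : ℝ :=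
  (1 / (2 * π * d)) * ∑' n : ℕ, magTerm B d z n * Real.sin (π * ((n : ℝ) + 1) * b / d) ^ 2
    + (1 / (4 * π * d)) *
      (Real.eulerMascheroniConstant + digamma (b / d) + (π / 2) * Real.cot (π * b / d))

/-!
On each interval free of poles the digamma function is strictly increasing: it is nondecreasing on
`(0, ∞)` because `log Γ` is convex there, and `ψ (x + n) = ψ x + ∑_{k < n} 1 / (x + k)` carries this
to the other intervals, the sum being strictly decreasing. The same recurrence gives
`ψ x ∼ -1 / (x + m)` at the pole `-m`. Hence on a spectral gap every transverse mode contributes a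
nondecreasing function of `z` to `ξ_B`, and a mode which produces an end point of the gap, with
nonzero sine weight, diverges to `-∞` at a lower and to `+∞` at an upper end point. Since
`log x - ψ (x + c) = O(1 / x)`, the series converges like `∑ 1 / n²`; as its terms are monotone, the
convergence is locally uniform, and the increment of the sum dominates the increment of any single
term. So `ξ_B` maps the gap bijectively and increasingly onto `ℝ`.
-/

theorem ne_neg_natCast_of_pos {x : ℝ} (hx : 0 < x) (m : ℕ) : x ≠ -m :=
  ((neg_nonpos.2 m.cast_nonneg).trans_lt hx).ne'

theorem inv_lt_inv_of_zero_notMem_Icc {x y : ℝ} (hxy : x < y) (h : (0 : ℝ) ∉ Set.Icc x y) :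
    y⁻¹ < x⁻¹ := by
  rcases lt_or_ge 0 x with hx | hx
  · exact inv_strictAnti₀ hx hxy
  · have hy : y < 0 := not_le.1 fun hy => h ⟨hx, hy⟩
    exact (inv_lt_inv_of_neg hy (hxy.trans hy)).2 hxy

theorem ofReal_digamma (x : ℝ) : (digamma x : ℂ) = Complex.digamma x := by
  rw [digamma, Complex.digamma_def, logDeriv_apply, Complex.Gamma_ofReal, Complex.ofReal_div]
  by_cases hx : ∀ m : ℕ, x ≠ -m
  · have hxc : ∀ m : ℕ, (x : ℂ) ≠ -m := fun m => by exact_mod_cast hx m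
    have hreal := (Real.differentiableAt_Gamma hx).hasDerivAt.ofReal_comp
    have hcomplex := (Complex.differentiableAt_Gamma x hxc).hasDerivAt.comp_ofReal
    simp only [Complex.Gamma_ofReal] at hcomplex
    rw [hreal.unique hcomplex]
  · -- at a pole both sides vanish, because `Gamma` has the junk value `0` there
    obtain ⟨m, rfl⟩ := not_forall_not.1 hx
    simp only [Real.Gamma_neg_nat_eq_zero, Complex.ofReal_zero, div_zero]

theorem digamma_add_one {x : ℝ} (hx : ∀ m : ℕ, x ≠ -m) : digamma (x + 1) = digamma x + x⁻¹ := by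
  have hcomplex := Complex.digamma_apply_add_one x fun m => by exact_mod_cast hx m
  rw [← Complex.ofReal_inj]
  push_cast [ofReal_digamma]
  exact hcomplex

theorem digamma_add_natCast {x : ℝ} (hx : ∀ m : ℕ, x ≠ -m) (n : ℕ) :
    digamma (x + n) = digamma x + ∑ k ∈ Finset.range n, (x + k)⁻¹ := by
  induction n with
  | zero => simp
  | succ n ih =>
    have hxn : ∀ m : ℕ, x + n ≠ -m := fun m h => hx (m + n) (by push_cast; linarith)
    rw [Nat.cast_succ, ← add_assoc, digamma_add_one hxn, ih, Finset.sum_range_succ, add_assoc]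

theorem continuousAt_digamma {x : ℝ} (hx : ∀ m : ℕ, x ≠ -m) : ContinuousAt digamma x := by
  have hGamma : Complex.Gamma x ≠ 0 := Complex.Gamma_ne_zero fun m => by exact_mod_cast hx m
  have hanalytic : AnalyticAt ℂ Complex.Gamma x :=
    ((Complex.differentiable_one_div_Gamma.analyticAt x).inv (inv_ne_zero hGamma)).congr
      (.of_forall fun _ => inv_inv _)
  have hcomplex : ContinuousAt Complex.digamma x :=
    hanalytic.deriv.continuousAt.div hanalytic.continuousAt hGamma
  have hre : digamma = fun y : ℝ => (Complex.digamma y).re := by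
    ext y
    rw [← ofReal_digamma, Complex.ofReal_re]
  rw [hre]
  exact Complex.continuous_re.continuousAt.comp
    (hcomplex.comp (f := Complex.ofReal) Complex.continuous_ofReal.continuousAt)

theorem hasDerivAt_log_Gamma {x : ℝ} (hx : ∀ m : ℕ, x ≠ -m) :
    HasDerivAt (Real.log ∘ Real.Gamma) (digamma x) x :=
  (Real.differentiableAt_Gamma hx).hasDerivAt.log (Real.Gamma_ne_zero hx)

theorem monotoneOn_digamma_Ioi : MonotoneOn digamma (Set.Ioi 0) :=
  (Real.convexOn_log_Gamma.monotoneOn_deriv fun _ hx =>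
    (hasDerivAt_log_Gamma (ne_neg_natCast_of_pos hx)).differentiableAt).congr fun _ hx =>
    (hasDerivAt_log_Gamma (ne_neg_natCast_of_pos hx)).deriv

theorem digamma_lt_digamma {x y : ℝ} (hxy : x < y) (h : ∀ m : ℕ, -(m : ℝ) ∉ Set.Icc x y) :
    digamma x < digamma y := by
  have hx : ∀ m : ℕ, x ≠ -m := fun m hm => h m ⟨hm.le, hm ▸ hxy.le⟩
  have hy : ∀ m : ℕ, y ≠ -m := fun m hm => h m ⟨hm ▸ hxy.le, hm.ge⟩
  obtain ⟨n, hn⟩ := exists_nat_gt (max 0 (-x))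
  obtain ⟨hn0, hxn⟩ := max_lt_iff.1 hn
  have hshift : digamma (x + n) ≤ digamma (y + n) :=
    monotoneOn_digamma_Ioi (Set.mem_Ioi.2 (by linarith)) (Set.mem_Ioi.2 (by linarith))
      (by linarith)
  have hsum : ∑ k ∈ Finset.range n, (y + k)⁻¹ < ∑ k ∈ Finset.range n, (x + k)⁻¹ := by
    refine Finset.sum_lt_sum_of_nonempty
      (Finset.nonempty_range_iff.2 (Nat.cast_pos.1 hn0).ne') fun k _ => ?_
    exact inv_lt_inv_of_zero_notMem_Icc (by linarith)
      fun h0 => h k ⟨by linarith [h0.1], by linarith [h0.2]⟩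
  rw [digamma_add_natCast hx, digamma_add_natCast hy] at hshift
  linarith

theorem eventually_nhdsNE_ne_neg_natCast (m : ℕ) :
    ∀ᶠ x : ℝ in 𝓝[≠] (-(m : ℝ)), ∀ k : ℕ, x ≠ -k := by
  filter_upwards [self_mem_nhdsWithin,
    nhdsWithin_le_nhds (Metric.ball_mem_nhds (-(m : ℝ)) one_pos)] with x hxm hx k hk
  have hdist : |(m : ℤ) - k| < 1 := by
    rw [hk, Metric.mem_ball, Real.dist_eq, neg_sub_neg] at hx
    exact_mod_cast hx
  have hmk : m = k := by exact_mod_cast sub_eq_zero.1 (Int.abs_lt_one_iff.1 hdist)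
  exact hxm (hmk ▸ hk)

theorem tendsto_digamma_add_inv_nhdsNE (m : ℕ) :
    Tendsto (fun x => digamma x + (x + m)⁻¹) (𝓝[≠] (-(m : ℝ)))
      (𝓝 (digamma 1 - ∑ k ∈ Finset.range m, (-(m : ℝ) + k)⁻¹)) := by
  have hregular : ContinuousAt
      (fun x : ℝ => digamma (x + (m + 1 : ℕ)) - ∑ k ∈ Finset.range m, (x + k)⁻¹) (-m) := by
    refine ContinuousAt.sub ?_ (tendsto_finsetSum _ fun k hk => ?_)
    · refine ContinuousAt.comp (g := digamma) (continuousAt_digamma ?_) (by fun_prop)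
      exact ne_neg_natCast_of_pos (by push_cast; linarith)
    · have hkm : (k : ℝ) < m := by exact_mod_cast Finset.mem_range.1 hk
      exact ContinuousAt.inv₀ (by fun_prop) (by linarith)
  have hlim := hregular.tendsto.mono_left (nhdsWithin_le_nhds (s := {-(m : ℝ)}ᶜ))
  have hval : -(m : ℝ) + (m + 1 : ℕ) = 1 := by push_cast; ring
  rw [hval] at hlim
  refine hlim.congr' ?_
  filter_upwards [eventually_nhdsNE_ne_neg_natCast m] with x hx
  rw [digamma_add_natCast hx, Finset.sum_range_succ]
  ring

theorem tendsto_digamma_nhdsGT_neg_natCast (m : ℕ) :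
    Tendsto digamma (𝓝[>] (-(m : ℝ))) atBot := by
  have hshift : Tendsto (fun x : ℝ => x + m) (𝓝[>] (-(m : ℝ))) (𝓝[>] 0) := by
    have hmaps : Set.MapsTo (fun x : ℝ => x + m) (Set.Ioi (-(m : ℝ))) (Set.Ioi (-(m : ℝ) + m)) :=
      add_left_strictMono.mapsTo_Ioi
    have hlim := ((continuous_add_const (m : ℝ)).continuousWithinAt
      (x := -(m : ℝ))).tendsto_nhdsWithin hmaps
    rwa [neg_add_cancel] at hlim
  have hregular := (tendsto_digamma_add_inv_nhdsNE m).mono_left (nhdsGT_le_nhdsNE _)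
  simpa using! hregular.add_atBot
    (tendsto_neg_atTop_atBot.comp (tendsto_inv_nhdsGT_zero.comp hshift))

theorem tendsto_digamma_nhdsLT_neg_natCast (m : ℕ) :
    Tendsto digamma (𝓝[<] (-(m : ℝ))) atTop := by
  have hshift : Tendsto (fun x : ℝ => x + m) (𝓝[<] (-(m : ℝ))) (𝓝[<] 0) := by
    have hmaps : Set.MapsTo (fun x : ℝ => x + m) (Set.Iio (-(m : ℝ))) (Set.Iio (-(m : ℝ) + m)) :=
      add_left_strictMono.mapsTo_Iio
    have hlim := ((continuous_add_const (m : ℝ)).continuousWithinAt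
      (x := -(m : ℝ))).tendsto_nhdsWithin hmaps
    rwa [neg_add_cancel] at hlim
  have hregular := (tendsto_digamma_add_inv_nhdsNE m).mono_left (nhdsLT_le_nhdsNE _)
  simpa using! hregular.add_atTop
    (tendsto_neg_atBot_atTop.comp (tendsto_inv_nhdsLT_zero.comp hshift))

theorem log_Gamma_add_one_sub_log_Gamma {x : ℝ} (hx : 0 < x) :
    Real.log (Real.Gamma (x + 1)) - Real.log (Real.Gamma x) = Real.log x := by
  rw [Real.Gamma_add_one hx.ne', Real.log_mul hx.ne' (Real.Gamma_pos_of_pos hx).ne',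
    add_sub_cancel_right]

theorem digamma_le_log {x : ℝ} (hx : 0 < x) : digamma x ≤ Real.log x := by
  have h := Real.convexOn_log_Gamma.le_slope_of_hasDerivAt hx (Set.mem_Ioi.2 (by linarith))
    (lt_add_one x) (hasDerivAt_log_Gamma (ne_neg_natCast_of_pos hx))
  rwa [slope_def_field, add_sub_cancel_left, div_one, Function.comp_apply, Function.comp_apply,
    log_Gamma_add_one_sub_log_Gamma hx] at h

theorem log_le_digamma_add_inv {x : ℝ} (hx : 0 < x) : Real.log x ≤ digamma x + x⁻¹ := by
  have hx1 : 0 < x + 1 := by linarith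
  have h := Real.convexOn_log_Gamma.slope_le_of_hasDerivAt hx hx1 (lt_add_one x)
    (hasDerivAt_log_Gamma (ne_neg_natCast_of_pos hx1))
  rwa [slope_def_field, add_sub_cancel_left, div_one, Function.comp_apply, Function.comp_apply,
    log_Gamma_add_one_sub_log_Gamma hx, digamma_add_one (ne_neg_natCast_of_pos hx)] at h

theorem isBigO_log_sub_digamma :
    (fun x => Real.log x - digamma x) =O[atTop] fun x : ℝ => x⁻¹ := by
  refine IsBigO.of_norm_eventuallyLE ?_
  filter_upwards [eventually_gt_atTop 0] with x hx
  rw [Real.norm_eq_abs, abs_of_nonneg (sub_nonneg.2 (digamma_le_log hx))]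
  linarith [log_le_digamma_add_inv hx]

theorem isBigO_log_sub_log_add_const (c : ℝ) :
    (fun x => Real.log x - Real.log (x + c)) =O[atTop] fun x : ℝ => x⁻¹ := by
  have hbounded := ((Real.tendsto_mul_log_one_add_div_atTop c).isBigO_one ℝ).neg_left
  refine ((isBigO_refl (fun x : ℝ => x⁻¹) atTop).mul hbounded).congr' ?_ (by simp)
  filter_upwards [eventually_gt_atTop 0, eventually_gt_atTop (-c)] with x hx hxc
  rw [one_add_div hx.ne', Real.log_div (by linarith) hx.ne']
  field_simp
  ring

theorem isBigO_log_sub_digamma_add_const (c : ℝ) :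
    (fun x => Real.log x - digamma (x + c)) =O[atTop] fun x : ℝ => x⁻¹ := by
  have hshift : Tendsto (fun x : ℝ => x + c) atTop atTop :=
    tendsto_atTop_add_const_right _ c tendsto_id
  have hinv : (fun x : ℝ => (x + c)⁻¹) =O[atTop] fun x : ℝ => x⁻¹ := by
    have hequiv : (fun x : ℝ => x + c) ~[atTop] fun x => x :=
      IsEquivalent.refl.add_isLittleO (isLittleO_const_id_atTop c)
    exact hequiv.inv.isBigO
  exact ((isBigO_log_sub_log_add_const c).add
    ((isBigO_log_sub_digamma.comp_tendsto hshift).trans hinv)).congr_left fun x => by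
      simp only [Function.comp_apply, sub_add_sub_cancel]

theorem term_sub_le_tsum_sub_tsum {ι : Type*} {u v : ι → ℝ} (hu : Summable u) (hv : Summable v)
    (huv : u ≤ v) (i : ι) : v i - u i ≤ ∑' j, v j - ∑' j, u j := by
  rw [← hv.tsum_sub hu]
  exact (hv.sub hu).le_tsum i fun j _ => sub_nonneg.2 (huv j)

theorem strictMonoOn_tsum {ι α : Type*} [Preorder α] {f : ι → α → ℝ} {s : Set α}
    (hsum : ∀ x ∈ s, Summable fun i => f i x) (hmono : ∀ i, MonotoneOn (f i) s)
    {i : ι} (hi : StrictMonoOn (f i) s) : StrictMonoOn (fun x => ∑' i, f i x) s :=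
  fun x hx y hy hxy =>
    Summable.tsum_lt_tsum (fun j => hmono j hx hy hxy.le) (hi hx hy hxy) (hsum x hx) (hsum y hy)

theorem continuousOn_tsum_Icc {ι α : Type*} [Preorder α] [TopologicalSpace α] {f : ι → α → ℝ}
    {u v : α} (hu : Summable fun i => f i u) (hv : Summable fun i => f i v)
    (hcont : ∀ i, ContinuousOn (f i) (Set.Icc u v))
    (hmono : ∀ i, MonotoneOn (f i) (Set.Icc u v)) :
    ContinuousOn (fun x => ∑' i, f i x) (Set.Icc u v) := by
  refine continuousOn_tsum hcont (hu.abs.add hv.abs) fun i x hx => ?_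
  have huv : u ≤ v := hx.1.trans hx.2
  have hlower : f i u ≤ f i x := hmono i (Set.left_mem_Icc.2 huv) hx hx.1
  have hupper : f i x ≤ f i v := hmono i hx (Set.right_mem_Icc.2 huv) hx.2
  exact (abs_le_max_abs_abs hlower hupper).trans
    (max_le_add_of_nonneg (abs_nonneg _) (abs_nonneg _))

section Ioo

variable {ι α : Type*} [LinearOrder α] [TopologicalSpace α] [OrderTopology α] [DenselyOrdered α]
  {f : ι → α → ℝ} {p q : α}

theorem continuousOn_tsum_Ioo (hsum : ∀ x ∈ Set.Ioo p q, Summable fun i => f i x)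
    (hcont : ∀ i, ContinuousOn (f i) (Set.Ioo p q))
    (hmono : ∀ i, MonotoneOn (f i) (Set.Ioo p q)) :
    ContinuousOn (fun x => ∑' i, f i x) (Set.Ioo p q) := by
  intro x hx
  obtain ⟨u, hpu, hux⟩ := exists_between hx.1
  obtain ⟨v, hxv, hvq⟩ := exists_between hx.2
  have hsub : Set.Icc u v ⊆ Set.Ioo p q := Set.Icc_subset_Ioo hpu hvq
  have huv : u ≤ v := (hux.trans hxv).le
  exact ((continuousOn_tsum_Icc (hsum u (hsub (Set.left_mem_Icc.2 huv)))
    (hsum v (hsub (Set.right_mem_Icc.2 huv))) (fun i => (hcont i).mono hsub)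
    fun i => (hmono i).mono hsub).continuousAt (Icc_mem_nhds hux hxv)).continuousWithinAt

theorem tendsto_tsum_nhdsGT_atBot (hpq : p < q)
    (hsum : ∀ x ∈ Set.Ioo p q, Summable fun i => f i x)
    (hmono : ∀ i, MonotoneOn (f i) (Set.Ioo p q))
    {i : ι} (hi : Tendsto (f i) (𝓝[>] p) atBot) :
    Tendsto (fun x => ∑' i, f i x) (𝓝[>] p) atBot := by
  obtain ⟨c, hc⟩ := Set.nonempty_Ioo.2 hpq
  refine tendsto_atBot_mono' _ ?_
    (tendsto_atBot_add_const_right _ (∑' j, f j c - f i c) hi)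
  filter_upwards [Ioo_mem_nhdsGT hc.1] with x hx
  have hx' : x ∈ Set.Ioo p q := ⟨hx.1, hx.2.trans hc.2⟩
  linarith [term_sub_le_tsum_sub_tsum (hsum x hx') (hsum c hc)
    (fun j => hmono j hx' hc hx.2.le) i]

theorem tendsto_tsum_nhdsLT_atTop (hpq : p < q)
    (hsum : ∀ x ∈ Set.Ioo p q, Summable fun i => f i x)
    (hmono : ∀ i, MonotoneOn (f i) (Set.Ioo p q))
    {i : ι} (hi : Tendsto (f i) (𝓝[<] q) atTop) :
    Tendsto (fun x => ∑' i, f i x) (𝓝[<] q) atTop := by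
  obtain ⟨c, hc⟩ := Set.nonempty_Ioo.2 hpq
  refine tendsto_atTop_mono' _ ?_
    (tendsto_atTop_add_const_right _ (∑' j, f j c - f i c) hi)
  filter_upwards [Ioo_mem_nhdsLT hc.2] with x hx
  have hx' : x ∈ Set.Ioo p q := ⟨hc.1.trans hx.1, hx.2⟩
  linarith [term_sub_le_tsum_sub_tsum (hsum c hc) (hsum x hx')
    (fun j => hmono j hc hx' hx.1.le) i]

end Ioo

/-- The argument `(|B| - z + (π(n+1)/d)²)/(2|B|)` of `ψ` in `magTerm B d z n`, as a function of `z`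
so that its behaviour on a spectral gap can be stated pointwise in the mode `n`. -/
noncomputable def magTermArg (B d : ℝ) (n : ℕ) (z : ℝ) : ℝ :=
  (|B| - z + (π * ((n : ℝ) + 1) / d) ^ 2) / (2 * |B|)

/-- The weighted contribution of the transverse mode `n + 1` to the series in `ξ_B(b,z)`, as a
function of the energy `z`. -/
noncomputable def xiBTerm (B d b : ℝ) (n : ℕ) (z : ℝ) : ℝ :=
  magTerm B d z n * Real.sin (π * ((n : ℝ) + 1) * b / d) ^ 2

section Modes

variable {B d b z z₀ z₁ : ℝ} {m n : ℕ} {s : Set ℝ}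

theorem magTermArg_eq_neg_natCast_iff (hB : B ≠ 0) :
    magTermArg B d n z = -m ↔
      |B| * (2 * (m : ℝ) + 1) + (π * ((n : ℝ) + 1) / d) ^ 2 = z := by
  have hB' : 2 * |B| ≠ 0 := mul_ne_zero two_ne_zero (abs_ne_zero.2 hB)
  rw [magTermArg, div_eq_iff hB']
  constructor <;> intro h <;> linarith

theorem strictAnti_magTermArg (hB : B ≠ 0) (d : ℝ) (n : ℕ) : StrictAnti (magTermArg B d n) := by
  intro z w hzw
  unfold magTermArg
  gcongr

theorem continuous_magTermArg (B d : ℝ) (n : ℕ) : Continuous (magTermArg B d n) := by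
  unfold magTermArg
  fun_prop

theorem strictMonoOn_magTerm (hB : B ≠ 0) (hs : s.OrdConnected)
    (hdisj : Disjoint s (landauLevels B d)) (n : ℕ) :
    StrictMonoOn (fun z => magTerm B d z n) s := by
  intro z hz w hw hzw
  have hanti := strictAnti_magTermArg hB d n
  refine sub_lt_sub_left (digamma_lt_digamma (hanti hzw) fun m hm => ?_) _
  have hlevel := (magTermArg_eq_neg_natCast_iff (d := d) (m := m) (n := n) hB).2 rfl
  rw [← hlevel] at hm
  exact Set.disjoint_left.1 hdisj
    (hs.out hz hw ⟨hanti.le_iff_ge.1 hm.2, hanti.le_iff_ge.1 hm.1⟩) ⟨m, n, rfl⟩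

theorem continuousAt_magTerm (hB : B ≠ 0) (hz : z ∉ landauLevels B d) (n : ℕ) :
    ContinuousAt (fun z => magTerm B d z n) z := by
  have hpole : ∀ m : ℕ, magTermArg B d n z ≠ -m := fun m h =>
    hz ⟨m, n, ((magTermArg_eq_neg_natCast_iff hB).1 h).symm⟩
  exact continuousAt_const.sub (ContinuousAt.comp (f := magTermArg B d n)
    (continuousAt_digamma hpole) (continuous_magTermArg B d n).continuousAt)

theorem tendsto_magTerm_nhdsGT (hB : B ≠ 0)
    (hz : |B| * (2 * (m : ℝ) + 1) + (π * ((n : ℝ) + 1) / d) ^ 2 = z) :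
    Tendsto (fun z => magTerm B d z n) (𝓝[>] z) atBot := by
  have harg : Tendsto (magTermArg B d n) (𝓝[>] z) (𝓝[<] (-(m : ℝ))) := by
    rw [← (magTermArg_eq_neg_natCast_iff hB).2 hz]
    exact (continuous_magTermArg B d n).continuousWithinAt.tendsto_nhdsWithin
      (strictAnti_magTermArg hB d n).mapsTo_Ioi
  exact tendsto_const_nhds.add_atBot (tendsto_neg_atTop_atBot.comp
    ((tendsto_digamma_nhdsLT_neg_natCast m).comp harg))

theorem tendsto_magTerm_nhdsLT (hB : B ≠ 0)
    (hz : |B| * (2 * (m : ℝ) + 1) + (π * ((n : ℝ) + 1) / d) ^ 2 = z) :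
    Tendsto (fun z => magTerm B d z n) (𝓝[<] z) atTop := by
  have harg : Tendsto (magTermArg B d n) (𝓝[<] z) (𝓝[>] (-(m : ℝ))) := by
    rw [← (magTermArg_eq_neg_natCast_iff hB).2 hz]
    exact (continuous_magTermArg B d n).continuousWithinAt.tendsto_nhdsWithin
      (strictAnti_magTermArg hB d n).mapsTo_Iio
  exact tendsto_const_nhds.add_atTop (tendsto_neg_atBot_atTop.comp
    ((tendsto_digamma_nhdsGT_neg_natCast m).comp harg))

theorem isBigO_magTerm (hB : B ≠ 0) (hd : d ≠ 0) (z : ℝ) :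
    magTerm B d z =O[atTop] fun n : ℕ => 1 / ((n : ℝ) + 1) ^ 2 := by
  set K : ℝ := π ^ 2 / (2 * |B| * d ^ 2) with hK
  have hKpos : 0 < K := by positivity
  have hlim : Tendsto (fun n : ℕ => K * ((n : ℝ) + 1) ^ 2) atTop atTop :=
    ((tendsto_pow_atTop two_ne_zero).comp
      (tendsto_atTop_add_const_right _ 1 tendsto_natCast_atTop_atTop)).const_mul_atTop hKpos
  have hO := (isBigO_log_sub_digamma_add_const ((|B| - z) / (2 * |B|))).comp_tendsto hlim
  refine (hO.trans (.of_bound K⁻¹ (.of_forall fun n => ?_))).congr_left fun n => ?_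
  · simp [abs_of_pos hKpos, mul_comm]
  · have hlog : (π * ((n : ℝ) + 1)) ^ 2 / (2 * |B| * d ^ 2) = K * ((n : ℝ) + 1) ^ 2 := by
      rw [hK]; ring
    have harg : (|B| - z + (π * ((n : ℝ) + 1) / d) ^ 2) / (2 * |B|) =
        K * ((n : ℝ) + 1) ^ 2 + (|B| - z) / (2 * |B|) := by
      rw [hK]; field_simp; ring
    rw [magTerm, hlog, harg, Function.comp_apply]

theorem summable_xiBTerm (hB : B ≠ 0) (hd : d ≠ 0) (b z : ℝ) :
    Summable fun n => xiBTerm B d b n z := by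
  have hsin : (fun n : ℕ => Real.sin (π * ((n : ℝ) + 1) * b / d) ^ 2) =O[atTop]
      fun _ => (1 : ℝ) := by
    refine IsBigO.of_norm_le fun n => ?_
    rw [Real.norm_eq_abs, abs_of_nonneg (sq_nonneg _)]
    exact Real.sin_sq_le_one _
  have hsq : Summable fun n : ℕ => 1 / ((n : ℝ) + 1) ^ 2 := by
    exact_mod_cast (summable_nat_add_iff 1).2 (Real.summable_one_div_nat_pow.2 one_lt_two)
  exact summable_of_isBigO_nat hsq
    (by simpa only [mul_one] using! (isBigO_magTerm hB hd z).mul hsin)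

theorem monotoneOn_xiBTerm (hB : B ≠ 0) (hs : s.OrdConnected)
    (hdisj : Disjoint s (landauLevels B d)) (n : ℕ) : MonotoneOn (xiBTerm B d b n) s :=
  fun _ hz _ hw hzw =>
    mul_le_mul_of_nonneg_right ((strictMonoOn_magTerm hB hs hdisj n).monotoneOn hz hw hzw)
      (sq_nonneg _)

theorem strictMonoOn_xiBTerm (hB : B ≠ 0) (hs : s.OrdConnected)
    (hdisj : Disjoint s (landauLevels B d)) (hsin : Real.sin (π * ((n : ℝ) + 1) * b / d) ≠ 0) :
    StrictMonoOn (xiBTerm B d b n) s := fun _ hz _ hw hzw =>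
  mul_lt_mul_of_pos_right (strictMonoOn_magTerm hB hs hdisj n hz hw hzw) (by positivity)

theorem continuousOn_xiBTerm (hB : B ≠ 0) (hdisj : Disjoint s (landauLevels B d)) (n : ℕ) :
    ContinuousOn (xiBTerm B d b n) s := fun _ hz =>
  ((continuousAt_magTerm hB (Set.disjoint_left.1 hdisj hz) n).mul_const _).continuousWithinAt

theorem strictMonoOn_xiB (hB : B ≠ 0) (hd : 0 < d) (hs : s.OrdConnected)
    (hdisj : Disjoint s (landauLevels B d)) (hsin : Real.sin (π * ((n : ℝ) + 1) * b / d) ≠ 0) :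
    StrictMonoOn (xiB B d b) s := by
  have hpos : 0 < 1 / (2 * π * d) := by positivity
  have hseries := strictMonoOn_tsum (fun z _ => summable_xiBTerm hB hd.ne' b z)
    (monotoneOn_xiBTerm hB hs hdisj) (strictMonoOn_xiBTerm hB hs hdisj hsin)
  exact fun _ hz _ hw hzw =>
    add_lt_add_left (mul_lt_mul_of_pos_left (hseries hz hw hzw) hpos) _

theorem continuousOn_xiB_Ioo (hB : B ≠ 0) (hd : d ≠ 0)
    (hgap : Disjoint (Set.Ioo z₀ z₁) (landauLevels B d)) :
    ContinuousOn (xiB B d b) (Set.Ioo z₀ z₁) :=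
  (continuousOn_const.mul (continuousOn_tsum_Ioo (fun z _ => summable_xiBTerm hB hd b z)
    (continuousOn_xiBTerm hB hgap) (monotoneOn_xiBTerm hB Set.ordConnected_Ioo hgap))).add
    continuousOn_const

theorem tendsto_xiB_nhdsGT (hB : B ≠ 0) (hd : 0 < d) (hlt : z₀ < z₁)
    (hgap : Disjoint (Set.Ioo z₀ z₁) (landauLevels B d))
    (hlevel : |B| * (2 * (m : ℝ) + 1) + (π * ((n : ℝ) + 1) / d) ^ 2 = z₀)
    (hsin : Real.sin (π * ((n : ℝ) + 1) * b / d) ≠ 0) :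
    Tendsto (xiB B d b) (𝓝[>] z₀) atBot := by
  have hpos : 0 < 1 / (2 * π * d) := by positivity
  have hterm : Tendsto (xiBTerm B d b n) (𝓝[>] z₀) atBot :=
    (tendsto_magTerm_nhdsGT hB hlevel).atBot_mul_const (by positivity)
  have hseries := tendsto_tsum_nhdsGT_atBot hlt (fun z _ => summable_xiBTerm hB hd.ne' b z)
    (monotoneOn_xiBTerm hB Set.ordConnected_Ioo hgap) hterm
  exact tendsto_atBot_add_const_right _ _ (hseries.const_mul_atBot hpos)

theorem tendsto_xiB_nhdsLT (hB : B ≠ 0) (hd : 0 < d) (hlt : z₀ < z₁)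
    (hgap : Disjoint (Set.Ioo z₀ z₁) (landauLevels B d))
    (hlevel : |B| * (2 * (m : ℝ) + 1) + (π * ((n : ℝ) + 1) / d) ^ 2 = z₁)
    (hsin : Real.sin (π * ((n : ℝ) + 1) * b / d) ≠ 0) :
    Tendsto (xiB B d b) (𝓝[<] z₁) atTop := by
  have hpos : 0 < 1 / (2 * π * d) := by positivity
  have hterm : Tendsto (xiBTerm B d b n) (𝓝[<] z₁) atTop :=
    (tendsto_magTerm_nhdsLT hB hlevel).atTop_mul_const (by positivity)
  have hseries := tendsto_tsum_nhdsLT_atTop hlt (fun z _ => summable_xiBTerm hB hd.ne' b z)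
    (monotoneOn_xiBTerm hB Set.ordConnected_Ioo hgap) hterm
  exact tendsto_atTop_add_const_right _ _ (hseries.const_mul_atTop hpos)

theorem exists_coupled_level_of_tsum_sin_sq_pos
    (h : 0 < ∑' n : {n : ℕ // ∃ m : ℕ,
        |B| * (2 * (m : ℝ) + 1) + (π * (((n : ℕ) : ℝ) + 1) / d) ^ 2 = z},
      Real.sin (π * (((n : ℕ) : ℝ) + 1) * b / d) ^ 2) :
    ∃ m n : ℕ, |B| * (2 * (m : ℝ) + 1) + (π * ((n : ℝ) + 1) / d) ^ 2 = z ∧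
      Real.sin (π * ((n : ℝ) + 1) * b / d) ≠ 0 := by
  contrapose! h
  refine ((tsum_congr fun ⟨n, m, hlevel⟩ => ?_).trans tsum_zero).le
  rw [h m n hlevel, zero_pow two_ne_zero]

end Modes

theorem xiB_unique_eigenvalue_in_gap_general (B d b z₀ z₁ : ℝ) (hB : B ≠ 0)
    (hd : 0 < d) (hlt : z₀ < z₁)
    (hgap : Set.Ioo z₀ z₁ ∩ landauLevels B d = ∅)
    (hs₀ : 0 < ∑' n : {n : ℕ // ∃ m : ℕ,
        |B| * (2 * (m : ℝ) + 1) + (π * (((n : ℕ) : ℝ) + 1) / d) ^ 2 = z₀},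
      Real.sin (π * (((n : ℕ) : ℝ) + 1) * b / d) ^ 2)
    (hs₁ : 0 < ∑' n : {n : ℕ // ∃ m : ℕ,
        |B| * (2 * (m : ℝ) + 1) + (π * (((n : ℕ) : ℝ) + 1) / d) ^ 2 = z₁},
      Real.sin (π * (((n : ℕ) : ℝ) + 1) * b / d) ^ 2) :
    (∀ α : ℝ, ∃! z : ℝ, z ∈ Set.Ioo z₀ z₁ ∧ xiB B d b z = α) ∧
    (∀ α α' z z' : ℝ, z ∈ Set.Ioo z₀ z₁ → z' ∈ Set.Ioo z₀ z₁ →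
      xiB B d b z = α → xiB B d b z' = α' → α < α' → z < z') := by
  obtain ⟨m₀, n₀, hlevel₀, hsin₀⟩ := exists_coupled_level_of_tsum_sin_sq_pos hs₀
  obtain ⟨m₁, n₁, hlevel₁, hsin₁⟩ := exists_coupled_level_of_tsum_sin_sq_pos hs₁
  have hdisj : Disjoint (Set.Ioo z₀ z₁) (landauLevels B d) :=
    Set.disjoint_iff_inter_eq_empty.2 hgap
  have hmono : StrictMonoOn (xiB B d b) (Set.Ioo z₀ z₁) :=
    strictMonoOn_xiB hB hd Set.ordConnected_Ioo hdisj hsin₀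
  have hsurj : Set.SurjOn (xiB B d b) (Set.Ioo z₀ z₁) Set.univ :=
    (continuousOn_xiB_Ioo hB hd.ne' hdisj).surjOn_of_tendsto (Set.nonempty_Ioo.2 hlt)
      ((tendsto_comp_coe_Ioo_atBot hlt).2 (tendsto_xiB_nhdsGT hB hd hlt hdisj hlevel₀ hsin₀))
      ((tendsto_comp_coe_Ioo_atTop hlt).2 (tendsto_xiB_nhdsLT hB hd hlt hdisj hlevel₁ hsin₁))
  constructor
  · intro α
    obtain ⟨z, hz, hzα⟩ := hsurj (Set.mem_univ α)
    exact ⟨z, ⟨hz, hzα⟩, fun w ⟨hw, hwα⟩ => hmono.injOn hw hz (hwα.trans hzα.symm)⟩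
  · rintro _ _ z z' hz hz' rfl rfl hlt'
    exact (hmono.lt_iff_lt hz hz').1 hlt'

/-- Unique eigenvalue in each magnetic gap: if `z₀ < z₁` are consecutive
Landau–transverse levels and the coupling sums `s₀, s₁` over `J(z₀), J(z₁)` are
positive, then for every `α ∈ ℝ` there is a unique `z ∈ (z₀,z₁)` with
`ξ_B(b,z) = α`, and this eigenvalue is strictly increasing in `α`. -/
theorem xiB_unique_eigenvalue_in_gap (B d b z₀ z₁ : ℝ) (hB : B ≠ 0) (hd : 0 < d)
    (hb0 : 0 < b) (hbd : b < d)
    (hz₀ : z₀ ∈ landauLevels B d) (hz₁ : z₁ ∈ landauLevels B d) (hlt : z₀ < z₁)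
    (hgap : Set.Ioo z₀ z₁ ∩ landauLevels B d = ∅)
    (hs₀ : 0 < ∑' n : {n : ℕ // ∃ m : ℕ,
        |B| * (2 * (m : ℝ) + 1) + (π * (((n : ℕ) : ℝ) + 1) / d) ^ 2 = z₀},
      Real.sin (π * (((n : ℕ) : ℝ) + 1) * b / d) ^ 2)
    (hs₁ : 0 < ∑' n : {n : ℕ // ∃ m : ℕ,
        |B| * (2 * (m : ℝ) + 1) + (π * (((n : ℕ) : ℝ) + 1) / d) ^ 2 = z₁},
      Real.sin (π * (((n : ℕ) : ℝ) + 1) * b / d) ^ 2) :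
    (∀ α : ℝ, ∃! z : ℝ, z ∈ Set.Ioo z₀ z₁ ∧ xiB B d b z = α) ∧
    (∀ α α' z z' : ℝ, z ∈ Set.Ioo z₀ z₁ → z' ∈ Set.Ioo z₀ z₁ →
      xiB B d b z = α → xiB B d b z' = α' → α < α' → z < z') :=
  xiB_unique_eigenvalue_in_gap_general B d b z₀ z₁ hB hd hlt hgap hs₀ hs₁
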